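/- Let β < α < 0 and r > 0, and let D ⊆ {ζ ∈ ℂ : Re ζ < β} be a set having an accumulation point in the open half-plane {Re ζ < β}. Let τ be a Schwartz function on ℝ supported in [0,∞) such that L{τ;·} has an analytic extension F to an open neighborhood of R̄_{α',r'} for some β < α' < α and r' > r, let 0 < h < −α', and set τ_h(x) = e^{-hx}τ(x). Then for every ε > 0 there exist n ∈ ℕ, ζ_1, …, ζ_n ∈ D, and c_1, …, c_n ∈ ℂ such that sup_{x≥0} | τ_h'(x) − Σ_{j=1}^n c_j ζ_j e^{ζ_j x} | + sup_{s∈R̄_{α,r}} | F(s+h) − Σ_{j=1}^n c_j/(s−ζ_j) | < ε, i.e., ‖τ_h − Σ_{j=1}^n c_j e_{ζ_j}‖_{α,r} < ε. -/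

import Mathlib

open Filter Set MeasureTheory

/-- The Laplace transform `L{f;s} = ∫_0^∞ f(x) e^{-sx} dx`. -/
noncomputable def Laplace (f : ℝ → ℂ) (s : ℂ) : ℂ :=
  ∫ x in Set.Ioi (0 : ℝ), f x * Complex.exp (-(s * (x : ℂ)))

/-- The closed rectangle `R̄_{α,r} = {s : α ≤ Re s ≤ 1, |Im s| ≤ r}`. -/
def Rbar (α r : ℝ) : Set ℂ := {s : ℂ | α ≤ s.re ∧ s.re ≤ 1 ∧ |s.im| ≤ r}

/-! Pair `ζ e^{ζx}` on `[0,∞)` with `1 / (s - ζ)` on `Rbar α r` and view the pair as a bounded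
continuous function `G ζ`. It depends holomorphically on `ζ` in the connected open set of `ζ` with
negative real part outside `Rbar α r`. The quotient map by the closed span of `G '' D` kills `G` on
`D`, hence by the identity theorem on the whole set, so every `G ζ` lies in that closed span.

It remains to write the pair of `τ_h'` and `F (· + h)` as an integral of the `G ζ`. Put
`Φ ζ = F (ζ + h)`. On a line `Re ζ = b` with `-h < b < 0`, Fourier inversion gives
`2πi τ_h' x = ∫ Φ ζ · ζ e^{ζx} dζ`, and for `b < Re s` also `2πi Φ s = ∫ Φ ζ / (s - ζ) dζ`. By
Cauchy's theorem the contour may be pushed to the left of `Rbar α r` between the heights `±R`,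
within the domain of `Φ`. It then runs where `G` is defined, and the second formula persists on
`Rbar α r` by analytic continuation in `s`. Rapid decay of `Φ` along the line makes the integral
of `Φ ζ • G ζ` converge in norm, so it lies in the closed span. -/

open Metric Topology BoundedContinuousFunction
open scoped FourierTransform SchwartzMap

section HolomorphicFamilies

theorem differentiableOn_of_separating_clm {ι E F : Type*} [NormedAddCommGroup E]
    [NormedSpace ℂ E] [CompleteSpace E] [NormedAddCommGroup F] [NormedSpace ℂ F] [CompleteSpace F]
    {Ω : Set ℂ} (hΩ : IsOpen Ω) {G : ℂ → E} (hG : ContinuousOn G Ω) (L : ι → E →L[ℂ] F)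
    (hL : ∀ x y, (∀ i, L i x = L i y) → x = y)
    (hLG : ∀ i, DifferentiableOn ℂ (fun ζ => L i (G ζ)) Ω) : DifferentiableOn ℂ G Ω := by
  intro c hc
  obtain ⟨ρ, hρ, hsub⟩ := nhds_basis_closedBall.mem_iff.1 (hΩ.mem_nhds hc)
  lift ρ to NNReal using hρ.le
  have hci : CircleIntegrable G c ρ :=
    (hG.mono (sphere_subset_closedBall.trans hsub)).circleIntegrable hρ.le
  have hcauchy : ∀ w ∈ ball c ρ,
      (2 * Real.pi * Complex.I : ℂ)⁻¹ • ∮ z in C(c, ρ), (z - w)⁻¹ • G z = G w := by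
    intro w hw
    have hwi : CircleIntegrable (fun z => (z - w)⁻¹ • G z) c ρ := by
      refine ContinuousOn.circleIntegrable hρ.le
        (.smul (.inv₀ (by fun_prop) fun z hz h0 => ?_)
          (hG.mono (sphere_subset_closedBall.trans hsub)))
      rw [sub_eq_zero.1 h0] at hz
      exact (mem_ball.1 hw).ne (mem_sphere.1 hz)
    refine hL _ _ fun i => ?_
    have hcomm : L i (∮ z in C(c, ρ), (z - w)⁻¹ • G z) =
        ∮ z in C(c, ρ), (z - w)⁻¹ • L i (G z) := by
      simp only [circleIntegral, ← (L i).intervalIntegral_comp_comm hwi.out, map_smul]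
    rw [map_smul, hcomm, ((hLG i).mono hsub).circleIntegral_sub_inv_smul hw,
      inv_smul_smul₀ Complex.two_pi_I_ne_zero]
  refine DifferentiableAt.differentiableWithinAt (DifferentiableAt.congr_of_eventuallyEq
    (hasFPowerSeriesOn_cauchy_integral hci hρ).analyticAt.differentiableAt ?_)
  filter_upwards [ball_mem_nhds c hρ] with w hw using (hcauchy w hw).symm

variable {ι F : Type*} [TopologicalSpace ι] [NormedAddCommGroup F] [NormedSpace ℂ F]
  {Ω : Set ℂ}

theorem continuousOn_boundedContinuousFunction_of_differentiableOn_eval (hΩ : IsOpen Ω)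
    {G : ℂ → ι →ᵇ F} (hG : ∀ p, DifferentiableOn ℂ (fun ζ => G ζ p) Ω)
    (hbdd : ∀ z ∈ Ω, ∃ C, ∀ᶠ ζ in 𝓝 z, ‖G ζ‖ ≤ C) : ContinuousOn G Ω := by
  intro z hz
  obtain ⟨C, hC⟩ := hbdd z hz
  obtain ⟨ρ, hρ, hball⟩ := Metric.eventually_nhds_iff_ball.1 (hC.and (hΩ.mem_nhds hz))
  have hlip : ∀ᶠ ζ in 𝓝 z, dist (G ζ) (G z) ≤ 2 * C / ρ * dist ζ z := by
    filter_upwards [ball_mem_nhds z hρ] with ζ hζ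
    have hC0 : 0 ≤ C := (norm_nonneg _).trans (hball z (mem_ball_self hρ)).1
    -- The Schwarz lemma bounds the Lipschitz constant uniformly in `p`.
    refine (dist_le (by positivity)).2 fun p => Complex.dist_le_div_mul_dist_of_mapsTo_ball
      ((hG p).mono fun w hw => (hball w hw).2) (fun w hw => ?_) hζ
    calc dist (G w p) (G z p) ≤ dist (G w) (G z) := dist_coe_le_dist p
      _ ≤ ‖G w‖ + ‖G z‖ := dist_le_norm_add_norm _ _
      _ ≤ 2 * C := by linarith [(hball w hw).1, (hball z (mem_ball_self hρ)).1]
  refine ContinuousAt.continuousWithinAt (tendsto_iff_dist_tendsto_zero.2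
    (squeeze_zero' (.of_forall fun _ => dist_nonneg) hlip ?_))
  exact Continuous.tendsto' (by fun_prop) _ _ (by simp)

theorem exists_differentiableOn_boundedContinuousFunction [CompleteSpace F] (hΩ : IsOpen Ω)
    {g : ℂ → ι → F} (hcont : ∀ ζ ∈ Ω, Continuous (g ζ))
    (hdiff : ∀ p, DifferentiableOn ℂ (fun ζ => g ζ p) Ω)
    (hbdd : ∀ z ∈ Ω, ∃ C, ∀ᶠ ζ in 𝓝 z, ∀ p, ‖g ζ p‖ ≤ C) :
    ∃ G : ℂ → ι →ᵇ F, DifferentiableOn ℂ G Ω ∧ ∀ ζ ∈ Ω, ⇑(G ζ) = g ζ := by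
  have hex : ∀ ζ ∈ Ω, ∃ f : ι →ᵇ F, ⇑f = g ζ := fun ζ hζ => by
    obtain ⟨C, hC⟩ := hbdd ζ hζ
    exact ⟨ofNormedAddCommGroup (g ζ) (hcont ζ hζ) C hC.self_of_nhds, rfl⟩
  choose! G hG using hex
  have hdiffG : ∀ p, DifferentiableOn ℂ (fun ζ => G ζ p) Ω := fun p =>
    (hdiff p).congr fun ζ hζ => congrFun (hG ζ hζ) p
  refine ⟨G, differentiableOn_of_separating_clm hΩ ?_ (fun p => evalCLM ℂ p) (fun _ _ => ext)
    hdiffG, hG⟩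
  refine continuousOn_boundedContinuousFunction_of_differentiableOn_eval hΩ hdiffG fun z hz => ?_
  obtain ⟨C, hC⟩ := hbdd z hz
  refine ⟨max C 0, ?_⟩
  filter_upwards [hC, hΩ.mem_nhds hz] with ζ hζC hζ
  exact (norm_le (le_max_right _ _)).2 fun p => hG ζ hζ ▸ (hζC p).trans (le_max_left _ _)

end HolomorphicFamilies

section SpanClosure

theorem mem_topologicalClosure_span_image_of_accPt {E : Type*} [NormedAddCommGroup E]
    [NormedSpace ℂ E] [CompleteSpace E] {Ω D : Set ℂ} (hΩ : IsOpen Ω) (hΩc : IsPreconnected Ω)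
    {G : ℂ → E} (hG : DifferentiableOn ℂ G Ω) {z : ℂ} (hz : z ∈ Ω) (hacc : AccPt z (𝓟 D))
    {ζ : ℂ} (hζ : ζ ∈ Ω) : G ζ ∈ (Submodule.span ℂ (G '' D)).topologicalClosure := by
  set M := (Submodule.span ℂ (G '' D)).topologicalClosure
  have : IsClosed (M : Set E) := Submodule.isClosed_topologicalClosure _
  have hmk : AnalyticOnNhd ℂ (fun w => M.mkQL (G w)) Ω :=
    (M.mkQL.differentiable.comp_differentiableOn hG).analyticOnNhd hΩ
  have hzero : ∃ᶠ w in 𝓝[≠] z, M.mkQL (G w) = 0 := by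
    refine (accPt_iff_frequently_nhdsNE.1 hacc).mono fun w hw => ?_
    exact (Submodule.Quotient.mk_eq_zero M).2
      (Submodule.le_topologicalClosure _ (Submodule.subset_span ⟨w, hw, rfl⟩))
  exact (Submodule.Quotient.mk_eq_zero M).1
    (hmk.eqOn_zero_of_preconnected_of_frequently_eq_zero hΩc hz hzero hζ)

theorem exists_norm_sub_sum_lt_of_mem_topologicalClosure_span {𝕜 E X : Type*}
    [NormedField 𝕜] [SeminormedAddCommGroup E] [NormedSpace 𝕜 E] {G : X → E} {D : Set X} {V : E}
    (hV : V ∈ (Submodule.span 𝕜 (G '' D)).topologicalClosure) {ε : ℝ} (hε : 0 < ε) :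
    ∃ (n : ℕ) (ζ : Fin n → X) (c : Fin n → 𝕜),
      (∀ j, ζ j ∈ D) ∧ ‖V - ∑ j, c j • G (ζ j)‖ < ε := by
  rw [← SetLike.mem_coe, Submodule.topologicalClosure_coe] at hV
  obtain ⟨w, hw, hVw⟩ := Metric.mem_closure_iff.1 hV ε hε
  obtain ⟨n, c, v, rfl⟩ := Submodule.mem_span_set'.1 hw
  choose ζ hζD hζ using fun j => (v j).2
  exact ⟨n, ζ, c, hζD, by simpa only [hζ, ← dist_eq_norm] using hVw⟩

end SpanClosure

section LaplaceFourier

open scoped ContDiff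

theorem laplace_eq_integral {f : ℝ → ℂ} (hf : ∀ x < 0, f x = 0) (s : ℂ) :
    Laplace f s = ∫ x : ℝ, f x * Complex.exp (-(s * x)) := by
  rw [Laplace, ← integral_Ici_eq_integral_Ioi]
  refine setIntegral_eq_integral_of_forall_compl_eq_zero fun x hx => ?_
  rw [hf x (not_le.1 hx), zero_mul]

theorem laplace_exp_mul (f : ℝ → ℂ) (a s : ℂ) :
    Laplace (fun x => Complex.exp (-(a * x)) * f x) s = Laplace f (s + a) := by
  refine integral_congr_ae (.of_forall fun x => ?_)
  simp only [add_mul, neg_add, Complex.exp_add]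
  ring

theorem laplace_mul_I {f : ℝ → ℂ} (hf : ∀ x < 0, f x = 0) (t : ℝ) :
    Laplace f (t * Complex.I) = 𝓕 f (t / (2 * Real.pi)) := by
  rw [Real.fourier_real_eq_integral_exp_smul, laplace_eq_integral hf]
  refine integral_congr_ae (.of_forall fun x => ?_)
  simp only [smul_eq_mul]
  rw [mul_comm]
  congr 2
  push_cast
  field_simp

theorem deriv_eq_zero_of_forall_neg {E : Type*} [NormedAddCommGroup E] [NormedSpace ℝ E]
    {f : ℝ → E} (hf : ∀ x < 0, f x = 0) {x : ℝ} (hx : x < 0) : deriv f x = 0 := by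
  have hzero : f =ᶠ[𝓝 x] fun _ => 0 := by
    filter_upwards [Iio_mem_nhds hx] with y hy using hf y hy
  rw [hzero.deriv_eq, deriv_const]

theorem exists_schwartzMap_exp_smul {E : Type*} [NormedAddCommGroup E] [NormedSpace ℝ E]
    (f : 𝓢(ℝ, E)) (hf : ∀ x < 0, f x = 0) {a : ℝ} (ha : 0 ≤ a) :
    ∃ g : 𝓢(ℝ, E), ∀ x, g x = Real.exp (-a * x) • f x := by
  have hexp : ContDiff ℝ ∞ fun x : ℝ => Real.exp (-a * x) := by fun_prop
  have hexp_le : ∀ (i : ℕ) {x : ℝ}, 0 ≤ x →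
      ‖iteratedFDeriv ℝ i (fun x : ℝ => Real.exp (-a * x)) x‖ ≤ a ^ i := fun i x hx => by
    rw [norm_iteratedFDeriv_eq_norm_iteratedDeriv, iteratedDeriv_exp_const_mul, norm_mul,
      norm_pow, norm_neg, Real.norm_of_nonneg ha, Real.norm_of_nonneg (Real.exp_pos _).le]
    refine mul_le_of_le_one_right (by positivity) (Real.exp_le_one_iff.2 ?_)
    nlinarith
  refine ⟨⟨fun x => Real.exp (-a * x) • f x, hexp.smul (f.smooth ⊤),
    fun k n => ?_⟩, fun x => rfl⟩
  choose C hC using fun i => f.decay k i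
  refine ⟨∑ i ∈ Finset.range (n + 1), n.choose i * a ^ i * C (n - i), fun x => ?_⟩
  have hC0 : ∀ i, 0 ≤ C i := fun i => (hC i).1.le
  rcases lt_or_ge x 0 with hx | hx
  · have hzero : (fun x => Real.exp (-a * x) • f x) =ᶠ[𝓝 x] fun _ => 0 := by
      filter_upwards [Iio_mem_nhds hx] with y hy using by rw [hf y hy, smul_zero]
    rw [(hzero.iteratedFDeriv ℝ n).eq_of_nhds, iteratedFDeriv_fun_zero]
    simp only [Pi.zero_apply, norm_zero, mul_zero]
    exact Finset.sum_nonneg fun i _ => mul_nonneg (by positivity) (hC0 _)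
  · grw [norm_iteratedFDeriv_smul_le hexp (f.smooth ⊤) x
      (mod_cast le_top : (n : WithTop ℕ∞) ≤ ∞), Finset.mul_sum]
    refine Finset.sum_le_sum fun i _ => ?_
    calc _ = n.choose i * ‖iteratedFDeriv ℝ i (fun x : ℝ => Real.exp (-a * x)) x‖
          * (‖x‖ ^ k * ‖iteratedFDeriv ℝ (n - i) f x‖) := by ring
      _ ≤ n.choose i * a ^ i * C (n - i) := by
        gcongr
        exacts [hexp_le i hx, (hC (n - i)).2 x]

variable {f : 𝓢(ℝ, ℂ)} (hf : ∀ x < 0, f x = 0)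
include hf

theorem exists_schwartzMap_eq_laplace :
    ∃ g : 𝓢(ℝ, ℂ), ∀ t : ℝ, g t = Laplace f (t * Complex.I) := by
  have h2π : (2 * Real.pi)⁻¹ ≠ 0 := by positivity
  refine ⟨SchwartzMap.compCLMOfContinuousLinearEquiv ℂ
    (ContinuousLinearEquiv.smulLeft (Units.mk0 _ h2π)) (𝓕 f), fun t => ?_⟩
  rw [SchwartzMap.compCLMOfContinuousLinearEquiv_apply, Function.comp_apply,
    SchwartzMap.fourier_coe, laplace_mul_I hf, div_eq_inv_mul]
  rfl

theorem integrable_laplace : Integrable fun t : ℝ => Laplace f (t * Complex.I) := by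
  obtain ⟨g, hg⟩ := exists_schwartzMap_eq_laplace hf
  simpa only [← hg] using g.integrable (μ := volume)

theorem continuous_laplace : Continuous fun t : ℝ => Laplace f (t * Complex.I) := by
  obtain ⟨g, hg⟩ := exists_schwartzMap_eq_laplace hf
  simpa only [← hg] using g.continuous

theorem integrable_laplace_mul_exp (x : ℝ) :
    Integrable fun t : ℝ => Laplace f (t * Complex.I) * Complex.exp (t * Complex.I * x) := by
  refine (integrable_laplace hf).mul_bdd (c := 1) (by fun_prop) (.of_forall fun t => ?_)
  simp [Complex.norm_exp]

theorem integral_laplace_mul_exp (x : ℝ) :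
    ∫ t : ℝ, Laplace f (t * Complex.I) * Complex.exp (t * Complex.I * x) =
      2 * Real.pi * f x := by
  have hinv := f.integrable.fourierInv_fourier_eq
    (by simpa only [SchwartzMap.fourier_coe] using (𝓕 f).integrable (μ := volume))
    (v := x) f.continuous.continuousAt
  rw [Real.fourierInv_eq'] at hinv
  have hscale := Measure.integral_comp_mul_left
    (fun t : ℝ => Laplace f (t * Complex.I) * Complex.exp (t * Complex.I * x)) (2 * Real.pi)
  have hintegrand : ∀ w : ℝ, Complex.exp (↑(2 * Real.pi * inner ℝ w x) * Complex.I) • 𝓕 ⇑f w =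
      Laplace f ((2 * Real.pi * w : ℝ) * Complex.I)
        * Complex.exp ((2 * Real.pi * w : ℝ) * Complex.I * x) := fun w => by
    rw [laplace_mul_I hf, mul_div_cancel_left₀ _ (by positivity), smul_eq_mul, mul_comm]
    congr 2
    simp only [RCLike.inner_apply, conj_trivial]
    push_cast
    ring
  simp only [← hintegrand, hinv] at hscale
  rw [hscale, abs_of_pos (by positivity), Complex.real_smul, ← mul_assoc]
  push_cast
  rw [mul_inv_cancel₀ (by simp [Real.pi_ne_zero]), one_mul]

theorem laplace_derivCLM (t : ℝ) :
    Laplace (SchwartzMap.derivCLM ℂ ℂ f) (t * Complex.I) =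
      t * Complex.I * Laplace f (t * Complex.I) := by
  rw [laplace_mul_I (f := SchwartzMap.derivCLM ℂ ℂ f) fun x hx => deriv_eq_zero_of_forall_neg hf hx,
    laplace_mul_I hf]
  refine (congrFun (Real.fourier_deriv f.integrable f.differentiable
    (SchwartzMap.derivCLM ℂ ℂ f).integrable) _).trans ?_
  simp only [smul_eq_mul]
  push_cast
  field_simp

theorem integrable_mul_laplace (b : ℂ) :
    Integrable fun t : ℝ => (b + t * Complex.I) * Laplace f (t * Complex.I) := by
  have hf' : ∀ x < 0, SchwartzMap.derivCLM ℂ ℂ f x = 0 := fun x hx =>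
    deriv_eq_zero_of_forall_neg hf hx
  refine (((integrable_laplace hf).const_mul b).add (integrable_laplace hf')).congr
    (.of_forall fun t => ?_)
  simp only [Pi.add_apply, laplace_derivCLM hf, add_mul]

theorem integrable_mul_laplace_mul_exp (b x : ℝ) :
    Integrable fun t : ℝ => (b + t * Complex.I) * Laplace f (t * Complex.I)
      * Complex.exp ((b + t * Complex.I) * x) := by
  refine (integrable_mul_laplace hf b).mul_bdd (c := Real.exp (b * x)) (by fun_prop)
    (.of_forall fun t => ?_)
  simp [Complex.norm_exp]

theorem integral_mul_laplace_mul_exp (b x : ℝ) :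
    ∫ t : ℝ, (b + t * Complex.I) * Laplace f (t * Complex.I)
        * Complex.exp ((b + t * Complex.I) * x) =
      2 * Real.pi * deriv (fun y : ℝ => Complex.exp (b * y) * f y) x := by
  set f' := SchwartzMap.derivCLM ℂ ℂ f
  have hf' : ∀ x < 0, f' x = 0 := fun x hx => deriv_eq_zero_of_forall_neg hf hx
  have hintegrand : ∀ t : ℝ, (b + t * Complex.I) * Laplace f (t * Complex.I)
      * Complex.exp ((b + t * Complex.I) * x) = Complex.exp (b * x) *
        (b * (Laplace f (t * Complex.I) * Complex.exp (t * Complex.I * x))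
          + Laplace f' (t * Complex.I) * Complex.exp (t * Complex.I * x)) := fun t => by
    rw [laplace_derivCLM hf, add_mul (b : ℂ) _ (x : ℂ), Complex.exp_add]
    ring
  have hexp : HasDerivAt (fun y : ℝ => Complex.exp (b * y)) (b * Complex.exp (b * x)) x := by
    simpa [mul_comm] using ((Complex.ofRealCLM.hasDerivAt (x := x)).const_mul (b : ℂ)).cexp
  simp only [hintegrand]
  rw [integral_const_mul, integral_add ((integrable_laplace_mul_exp hf x).const_mul _)
      (integrable_laplace_mul_exp hf' x), integral_const_mul, integral_laplace_mul_exp hf,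
    integral_laplace_mul_exp hf', (hexp.fun_mul (f.differentiableAt.hasDerivAt)).deriv]
  simp only [f', SchwartzMap.derivCLM_apply]
  ring

theorem integrable_laplace_div_sub {s : ℂ} (hs : 0 < s.re) :
    Integrable fun t : ℝ => Laplace f (t * Complex.I) / (s - t * Complex.I) := by
  simp only [div_eq_mul_inv]
  refine (integrable_laplace hf).mul_bdd (c := s.re⁻¹)
    (by fun_prop : Measurable _).aestronglyMeasurable (.of_forall fun t => ?_)
  rw [norm_inv]
  gcongr
  simpa using Complex.re_le_norm (s - t * Complex.I)

theorem integral_laplace_div_sub {s : ℂ} (hs : 0 < s.re) :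
    ∫ t : ℝ, Laplace f (t * Complex.I) / (s - t * Complex.I) = 2 * Real.pi * Laplace f s := by
  have hre : ∀ t : ℝ, (-(s - t * Complex.I)).re < 0 := fun t => by simpa using hs
  have hinner : ∀ t : ℝ, Laplace f (t * Complex.I) / (s - t * Complex.I) = ∫ x in Ioi (0 : ℝ),
      Laplace f (t * Complex.I) * Complex.exp (-(s - t * Complex.I) * x) := fun t => by
    rw [integral_const_mul, integral_exp_mul_complex_Ioi (hre t), Complex.ofReal_zero, mul_zero,
      Complex.exp_zero, neg_div_neg_eq, mul_one_div]
  have hint : Integrable (Function.uncurry fun (t x : ℝ) =>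
      Laplace f (t * Complex.I) * Complex.exp (-(s - t * Complex.I) * x))
      (volume.prod (volume.restrict (Ioi 0))) := by
    refine ((integrable_laplace hf).mul_prod
      (integrableOn_exp_mul_complex_Ioi (a := -s) (by simpa using hs) 0)).mono ?_
      (.of_forall fun p => ?_)
    · have := (continuous_laplace hf).comp (continuous_fst (X := ℝ) (Y := ℝ))
      exact (this.mul (by fun_prop)).aestronglyMeasurable
    · simp [Function.uncurry, Complex.norm_exp]
  simp only [hinner]
  rw [integral_integral_swap hint, Laplace, ← integral_const_mul]
  refine integral_congr_ae (.of_forall fun x => ?_)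
  simp only
  rw [← mul_assoc, ← integral_laplace_mul_exp hf, ← integral_mul_const]
  refine integral_congr_ae (.of_forall fun t => ?_)
  simp only [mul_assoc, ← Complex.exp_add]
  ring_nf

end LaplaceFourier

section Detour

/-- The contour running up the line `Re z = b`, except that between the heights `-R` and `R` it
makes a rectangular detour through the line `Re z = c`. -/
def detour (b c R : ℝ) : Set ℂ :=
  {z | z.re ∈ Icc c b ∧ (z.re = c ∨ R ≤ |z.im|) ∧ (z.re = b ∨ |z.im| ≤ R)}

/-- The contour integral of `f` along `detour b c R`, oriented upwards. -/
noncomputable def detourIntegral {E : Type*} [NormedAddCommGroup E] [NormedSpace ℂ E]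
    (b c R : ℝ) (f : ℂ → E) : E :=
  (Complex.I • (∫ t : ℝ in (Icc (-R) R)ᶜ, f (b + t * Complex.I)) +
      Complex.I • ∫ t : ℝ in Icc (-R) R, f (c + t * Complex.I)) -
    (∫ t : ℝ in Icc c b, f (t + (-R : ℝ) * Complex.I)) +
    ∫ t : ℝ in Icc c b, f (t + R * Complex.I)

variable {b c R : ℝ}

theorem notMem_of_mem_detour {z : ℂ} (hz : z ∈ detour b c R) :
    z ∉ {s : ℂ | c < s.re ∧ |s.im| < R} := by
  rintro ⟨hre, him⟩
  obtain ⟨-, h | h, -⟩ := hz <;> linarith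

theorem line_mem_detour (hcb : c ≤ b) {t : ℝ} (ht : t ∈ (Icc (-R) R)ᶜ) :
    (b + t * Complex.I : ℂ) ∈ detour b c R := by
  rw [mem_compl_iff, mem_Icc, ← abs_le, not_le] at ht
  simp [detour, hcb, ht.le]

theorem segment_mem_detour (hcb : c ≤ b) {t : ℝ} (ht : t ∈ Icc (-R) R) :
    (c + t * Complex.I : ℂ) ∈ detour b c R := by
  simp [detour, hcb, abs_le.2 ht]

theorem top_mem_detour (hR : 0 ≤ R) {t : ℝ} (ht : t ∈ Icc c b) :
    (t + R * Complex.I : ℂ) ∈ detour b c R := by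
  simpa [detour, abs_of_nonneg hR] using ht

theorem bottom_mem_detour (hR : 0 ≤ R) {t : ℝ} (ht : t ∈ Icc c b) :
    (t + (-R : ℝ) * Complex.I : ℂ) ∈ detour b c R := by
  simpa [detour, abs_of_nonneg hR] using ht

variable {E F : Type*} [NormedAddCommGroup E] [NormedAddCommGroup F]

theorem integrableOn_segments_of_continuousOn_detour (hcb : c ≤ b) (hR : 0 ≤ R) {f : ℂ → E}
    (hf : ContinuousOn f (detour b c R)) :
    IntegrableOn (fun t : ℝ => f (c + t * Complex.I)) (Icc (-R) R) ∧
      IntegrableOn (fun t : ℝ => f (t + (-R : ℝ) * Complex.I)) (Icc c b) ∧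
      IntegrableOn (fun t : ℝ => f (t + R * Complex.I)) (Icc c b) :=
  ⟨(hf.comp (by fun_prop) fun _ => segment_mem_detour hcb).integrableOn_compact isCompact_Icc,
    (hf.comp (by fun_prop) fun _ => bottom_mem_detour hR).integrableOn_compact isCompact_Icc,
    (hf.comp (by fun_prop) fun _ => top_mem_detour hR).integrableOn_compact isCompact_Icc⟩

variable [NormedSpace ℂ E] [NormedSpace ℂ F]

theorem map_detourIntegral [CompleteSpace E] [CompleteSpace F] (L : E →L[ℂ] F)
    (hcb : c ≤ b) (hR : 0 ≤ R) {f : ℂ → E} (hf : ContinuousOn f (detour b c R))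
    (hline : IntegrableOn (fun t : ℝ => f (b + t * Complex.I)) (Icc (-R) R)ᶜ) :
    L (detourIntegral b c R f) = detourIntegral b c R fun z => L (f z) := by
  obtain ⟨hsegment, hbottom, htop⟩ := integrableOn_segments_of_continuousOn_detour hcb hR hf
  simp only [detourIntegral, map_add, map_sub, map_smul, ← L.integral_comp_comm hline,
    ← L.integral_comp_comm hsegment, ← L.integral_comp_comm hbottom,
    ← L.integral_comp_comm htop]

theorem detourIntegral_congr (hcb : c ≤ b) (hR : 0 ≤ R) {f g : ℂ → E}
    (hfg : EqOn f g (detour b c R)) : detourIntegral b c R f = detourIntegral b c R g := by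
  unfold detourIntegral
  refine congrArg₂ _ (congrArg₂ _ (congrArg₂ _ (congrArg _ ?_) (congrArg _ ?_)) ?_) ?_
  · exact setIntegral_congr_fun measurableSet_Icc.compl fun _ ht => hfg (line_mem_detour hcb ht)
  · exact setIntegral_congr_fun measurableSet_Icc fun _ ht => hfg (segment_mem_detour hcb ht)
  · exact setIntegral_congr_fun measurableSet_Icc fun _ ht => hfg (bottom_mem_detour hR ht)
  · exact setIntegral_congr_fun measurableSet_Icc fun _ ht => hfg (top_mem_detour hR ht)

theorem detourIntegral_mem [CompleteSpace E] (M : Submodule ℂ E) [IsClosed (M : Set E)]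
    (hcb : c ≤ b) (hR : 0 ≤ R) {f : ℂ → E} (hf : ContinuousOn f (detour b c R))
    (hline : IntegrableOn (fun t : ℝ => f (b + t * Complex.I)) (Icc (-R) R)ᶜ)
    (hM : ∀ z ∈ detour b c R, f z ∈ M) : detourIntegral b c R f ∈ M := by
  have hzero : EqOn (fun z => M.mkQL (f z)) 0 (detour b c R) := fun z hz =>
    (Submodule.Quotient.mk_eq_zero M).2 (hM z hz)
  refine (Submodule.Quotient.mk_eq_zero M).1 ((map_detourIntegral M.mkQL hcb hR
    hf hline).trans ?_)
  rw [detourIntegral_congr hcb hR hzero]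
  simp [detourIntegral]

theorem detourIntegral_eq_integral_line [CompleteSpace E] (hcb : c ≤ b) (hR : 0 ≤ R) {f : ℂ → E}
    (hf : DifferentiableOn ℂ f (Icc c b ×ℂ Icc (-R) R))
    (hline : Integrable fun t : ℝ => f (b + t * Complex.I)) :
    detourIntegral b c R f = Complex.I • ∫ t : ℝ, f (b + t * Complex.I) := by
  have hRR : -R ≤ R := by linarith
  have hrect := Complex.integral_boundary_rect_eq_zero_of_differentiableOn f
    (c + (-R : ℝ) * Complex.I) (b + R * Complex.I)
    (by simpa [uIcc_of_le hcb, uIcc_of_le hRR] using hf)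
  simp only [Complex.add_re, Complex.add_im, Complex.mul_re, Complex.mul_im, Complex.ofReal_re,
    Complex.ofReal_im, Complex.I_re, Complex.I_im, mul_zero, mul_one, sub_zero, add_zero, zero_add,
    intervalIntegral.integral_of_le hcb, intervalIntegral.integral_of_le hRR,
    ← integral_Icc_eq_integral_Ioc] at hrect
  rw [← integral_add_compl (measurableSet_Icc (a := -R) (b := R)) hline, smul_add, detourIntegral,
    ← sub_eq_zero, ← neg_eq_zero, ← hrect]
  abel

end Detour

section CauchyTransform

theorem differentiableOn_integral_div_sub {X : Type*} [MeasurableSpace X] {μ : Measure X}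
    {φ : X → ℂ} (hφ : Integrable φ μ) {γ : X → ℂ} (hγ : AEMeasurable γ μ) {W : Set ℂ}
    (hW : IsOpen W) (hγW : ∀ᵐ t ∂μ, γ t ∉ W) :
    DifferentiableOn ℂ (fun s => ∫ t, φ t / (s - γ t) ∂μ) W := by
  intro s hs
  obtain ⟨d, hd, hball⟩ := Metric.isOpen_iff.1 hW s hs
  have hdist : ∀ᵐ t ∂μ, ∀ w ∈ ball s (d / 2), d / 2 ≤ ‖w - γ t‖ := by
    filter_upwards [hγW] with t ht w hw
    have hγs : d ≤ dist (γ t) s := not_lt.1 fun h => ht (hball h)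
    rw [← dist_eq_norm]
    linarith [dist_triangle_left (γ t) s w, mem_ball.1 hw]
  have hmeas : ∀ w, AEStronglyMeasurable (fun t => φ t / (w - γ t)) μ := fun w =>
    (hφ.aemeasurable.div (hγ.const_sub w)).aestronglyMeasurable
  refine (hasDerivAt_integral_of_dominated_loc_of_deriv_le (x₀ := s) (s := ball s (d / 2))
    (F' := fun w t => -φ t / (w - γ t) ^ 2) (bound := fun t => ‖φ t‖ / (d / 2) ^ 2)
    (ball_mem_nhds s (by positivity)) (.of_forall hmeas) ?_ ?_ ?_ (hφ.norm.div_const _)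
    ?_).2.differentiableAt.differentiableWithinAt
  · refine (hφ.norm.div_const (d / 2)).mono' (hmeas s) ?_
    filter_upwards [hdist] with t ht
    rw [norm_div]
    gcongr
    exact ht s (mem_ball_self (by positivity))
  · exact (hφ.aemeasurable.neg.div ((hγ.const_sub s).pow_const 2)).aestronglyMeasurable
  · filter_upwards [hdist] with t ht w hw
    rw [norm_div, norm_neg, norm_pow]
    gcongr
    exact ht w hw
  · filter_upwards [hdist] with t ht w hw
    have hne : w - γ t ≠ 0 := norm_pos_iff.1 ((by positivity : 0 < d / 2).trans_le (ht w hw))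
    simpa using (hasDerivAt_const w (φ t)).fun_div ((hasDerivAt_id' w).sub_const (γ t)) hne

variable {b c R : ℝ}

theorem isOpen_halfStrip (c R : ℝ) : IsOpen {s : ℂ | c < s.re ∧ |s.im| < R} :=
  (isOpen_lt continuous_const Complex.continuous_re).inter
    (isOpen_lt Complex.continuous_im.abs continuous_const)

theorem isPreconnected_halfStrip (c R : ℝ) :
    IsPreconnected {s : ℂ | c < s.re ∧ |s.im| < R} := by
  simp only [abs_lt]
  exact ((convex_halfSpace_re_gt c).inter ((convex_halfSpace_im_gt (-R)).inter
    (convex_halfSpace_im_lt R))).isPreconnected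

theorem differentiableOn_detourIntegral_div_sub (hcb : c ≤ b) (hR : 0 ≤ R) {φ : ℂ → ℂ}
    (hφ : ContinuousOn φ (detour b c R))
    (hline : IntegrableOn (fun t : ℝ => φ (b + t * Complex.I)) (Icc (-R) R)ᶜ) :
    DifferentiableOn ℂ (fun s => detourIntegral b c R fun z => φ z / (s - z))
      {s : ℂ | c < s.re ∧ |s.im| < R} := by
  obtain ⟨hsegment, hbottom, htop⟩ := integrableOn_segments_of_continuousOn_detour hcb hR hφ
  have hpiece : ∀ {γ : ℝ → ℂ} {S : Set ℝ}, Continuous γ → MeasurableSet S →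
      (∀ t ∈ S, γ t ∈ detour b c R) → IntegrableOn (fun t => φ (γ t)) S →
      DifferentiableOn ℂ (fun s => ∫ t in S, φ (γ t) / (s - γ t))
        {s : ℂ | c < s.re ∧ |s.im| < R} := fun hγ hS hmem hint =>
    differentiableOn_integral_div_sub hint hγ.aemeasurable (isOpen_halfStrip c R)
      ((ae_restrict_mem hS).mono fun t ht => notMem_of_mem_detour (hmem t ht))
  have hline' := hpiece (γ := fun t => b + t * Complex.I) (by fun_prop) measurableSet_Icc.compl
    (fun _ => line_mem_detour hcb) hline
  have hsegment' := hpiece (γ := fun t => c + t * Complex.I) (by fun_prop) measurableSet_Icc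
    (fun _ => segment_mem_detour hcb) hsegment
  have hbottom' := hpiece (γ := fun t => t + (-R : ℝ) * Complex.I) (by fun_prop) measurableSet_Icc
    (fun _ => bottom_mem_detour hR) hbottom
  have htop' := hpiece (γ := fun t => t + R * Complex.I) (by fun_prop) measurableSet_Icc
    (fun _ => top_mem_detour hR) htop
  exact (((hline'.const_smul Complex.I).add (hsegment'.const_smul Complex.I)).sub hbottom').add
    htop'

end CauchyTransform

section ExpKernel

/-- The left half-plane with `Rbar α r` removed: the exponents `ζ` for which both components of
`expKernel α r ζ` are bounded. -/
def expDomain (α r : ℝ) : Set ℂ := {ζ | ζ.re < 0} \ Rbar α r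

/-- The derivative `x ↦ ζ e^{ζx}` of `e_ζ` on `[0,∞)` together with the Laplace transform
`s ↦ 1 / (s - ζ)` of `e_ζ` on `Rbar α r`, glued into one function on the disjoint union so that
its sup norm controls both suprema in the norm `‖e_ζ‖_{α,r}`. -/
noncomputable def expKernel (α r : ℝ) (ζ : ℂ) : Ici (0 : ℝ) ⊕ Rbar α r → ℂ :=
  Sum.elim (fun x => ζ * Complex.exp (ζ * (x : ℝ))) fun s => 1 / (s - ζ)

variable {α r : ℝ} {ζ : ℂ}

theorem isOpen_expDomain (α r : ℝ) : IsOpen (expDomain α r) := by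
  have hclosed : IsClosed (Rbar α r) :=
    (isClosed_le continuous_const Complex.continuous_re).inter
      ((isClosed_le Complex.continuous_re continuous_const).inter
        (isClosed_le Complex.continuous_im.abs continuous_const))
  exact (isOpen_lt Complex.continuous_re continuous_const).sdiff hclosed

theorem mem_expDomain : ζ ∈ expDomain α r ↔ ζ.re < 0 ∧ (ζ.re < α ∨ r < |ζ.im|) := by
  refine and_congr_right fun (hζ : ζ.re < 0) => ?_
  have hζ1 : ζ.re ≤ 1 := by linarith
  simp only [Rbar, mem_ofPred_eq, hζ1, true_and, not_and_or, not_le]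

theorem isPreconnected_expDomain (α r : ℝ) : IsPreconnected (expDomain α r) := by
  have hunion : expDomain α r = ({ζ | ζ.re < 0} ∩ {ζ | ζ.re < α}) ∪
      ({ζ | ζ.re < 0} ∩ {ζ | r < ζ.im}) ∪ ({ζ | ζ.re < 0} ∩ {ζ | ζ.im < -r}) := by
    ext ζ
    simp only [mem_expDomain, lt_abs, mem_union, mem_inter_iff, mem_ofPred_eq, lt_neg (a := r)]
    tauto
  have hneg := convex_halfSpace_re_lt 0
  rw [hunion]
  refine .union (⟨min α 0 - 1, -r - 1⟩ : ℂ) ?_ ?_ (.union (⟨min α 0 - 1, r + 1⟩ : ℂ) ?_ ?_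
    (hneg.inter (convex_halfSpace_re_lt α)).isPreconnected
    (hneg.inter (convex_halfSpace_im_gt r)).isPreconnected)
    (hneg.inter (convex_halfSpace_im_lt (-r))).isPreconnected
  all_goals have h1 := min_le_left α 0; have h2 := min_le_right α 0
  · left
    constructor <;> simp only [mem_ofPred_eq] <;> linarith
  all_goals constructor <;> simp only [mem_ofPred_eq] <;> linarith

theorem norm_expKernel_le (hζ : ζ.re ≤ 0) {d : ℝ} (hd : 0 < d)
    (hdist : ∀ s ∈ Rbar α r, d ≤ ‖s - ζ‖) (p : Ici (0 : ℝ) ⊕ Rbar α r) :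
    ‖expKernel α r ζ p‖ ≤ ‖ζ‖ + d⁻¹ := by
  rcases p with ⟨x, hx⟩ | ⟨s, hs⟩
  · have hexp : ‖Complex.exp (ζ * x)‖ ≤ 1 := by
      rw [Complex.norm_exp, Real.exp_le_one_iff, Complex.re_mul_ofReal]
      exact mul_nonpos_of_nonpos_of_nonneg hζ hx
    simp only [expKernel, Sum.elim_inl, norm_mul]
    exact (mul_le_of_le_one_right (norm_nonneg _) hexp).trans
      (le_add_of_nonneg_right (by positivity))
  · simp only [expKernel, Sum.elim_inr, one_div, norm_inv]
    exact (inv_anti₀ hd (hdist s hs)).trans (le_add_of_nonneg_left (norm_nonneg _))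

theorem continuous_expKernel (hζ : ζ ∈ expDomain α r) : Continuous (expKernel α r ζ) := by
  refine Continuous.sumElim (by fun_prop) (.div (by fun_prop) (by fun_prop) ?_)
  rintro ⟨s, hs⟩ h0
  exact hζ.2 (sub_eq_zero.1 h0 ▸ hs)

theorem differentiableOn_expKernel (p : Ici (0 : ℝ) ⊕ Rbar α r) :
    DifferentiableOn ℂ (fun ζ => expKernel α r ζ p) (expDomain α r) := by
  rcases p with x | ⟨s, hs⟩
  · simp only [expKernel, Sum.elim_inl]
    fun_prop
  · simp only [expKernel, Sum.elim_inr]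
    refine .div (by fun_prop) (by fun_prop) fun ζ hζ h0 => hζ.2 (sub_eq_zero.1 h0 ▸ hs)

theorem exists_differentiableOn_expKernel (α r : ℝ) :
    ∃ G : ℂ → (Ici (0 : ℝ) ⊕ Rbar α r) →ᵇ ℂ, DifferentiableOn ℂ G (expDomain α r) ∧
      ∀ ζ ∈ expDomain α r, ⇑(G ζ) = expKernel α r ζ := by
  refine exists_differentiableOn_boundedContinuousFunction (isOpen_expDomain α r)
    (fun ζ hζ => continuous_expKernel hζ) differentiableOn_expKernel fun z hz => ?_
  obtain ⟨ρ, hρ, hball⟩ := Metric.isOpen_iff.1 (isOpen_expDomain α r) z hz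
  refine ⟨‖z‖ + ρ + (ρ / 2)⁻¹, ?_⟩
  filter_upwards [ball_mem_nhds z (half_pos hρ)] with ζ hζ p
  rw [mem_ball] at hζ
  have hnorm : ‖ζ‖ ≤ ‖z‖ + ρ := by
    rw [dist_eq_norm] at hζ
    linarith [norm_le_norm_add_norm_sub' ζ z]
  refine (norm_expKernel_le (hball (mem_ball.2 (by linarith))).1.le (half_pos hρ)
    (fun s hs => ?_) p).trans (by gcongr)
  have hsz : ρ ≤ dist s z := not_lt.1 fun h => (hball h).2 hs
  rw [← dist_eq_norm]
  linarith [dist_triangle s ζ z]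

end ExpKernel

section Representation

/-- The closed region to the right of `detour b c R`. -/
def rightOfDetour (b c R : ℝ) : Set ℂ := {s | c ≤ s.re ∧ (|s.im| ≤ R ∨ b ≤ s.re)}

variable {b c R : ℝ} {f : 𝓢(ℝ, ℂ)} {Φ : ℂ → ℂ}

theorem detour_subset_rightOfDetour : detour b c R ⊆ rightOfDetour b c R :=
  fun _ hz => ⟨hz.1.1, hz.2.2.symm.imp_right ge_of_eq⟩

theorem reProdIm_subset_rightOfDetour : Icc c b ×ℂ Icc (-R) R ⊆ rightOfDetour b c R :=
  fun _ hz => ⟨hz.1.1, .inl (abs_le.2 hz.2)⟩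

theorem detourIntegral_mul_mul_exp (hf : ∀ x < 0, f x = 0) (hcb : c ≤ b) (hR : 0 ≤ R)
    (hΦ : DifferentiableOn ℂ Φ (Icc c b ×ℂ Icc (-R) R))
    (hΦf : ∀ t : ℝ, Φ (b + t * Complex.I) = Laplace f (t * Complex.I)) (x : ℝ) :
    detourIntegral b c R (fun z => Φ z * (z * Complex.exp (z * x))) =
      2 * Real.pi * Complex.I * deriv (fun y : ℝ => Complex.exp (b * y) * f y) x := by
  have hline : ∀ t : ℝ, Φ (b + t * Complex.I) *
      ((b + t * Complex.I) * Complex.exp ((b + t * Complex.I) * x)) =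
      (b + t * Complex.I) * Laplace f (t * Complex.I) *
        Complex.exp ((b + t * Complex.I) * x) := fun t => by
    rw [hΦf]
    ring
  rw [detourIntegral_eq_integral_line hcb hR (hΦ.fun_mul (by fun_prop))
    (by simpa only [hline] using integrable_mul_laplace_mul_exp hf b x)]
  simp only [hline, integral_mul_laplace_mul_exp hf, smul_eq_mul]
  ring

theorem detourIntegral_div_sub_of_lt_re (hf : ∀ x < 0, f x = 0) (hcb : c ≤ b) (hR : 0 ≤ R)
    (hΦ : DifferentiableOn ℂ Φ (Icc c b ×ℂ Icc (-R) R))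
    (hΦf : ∀ s : ℂ, b ≤ s.re → Φ s = Laplace f (s - b)) {s : ℂ} (hs : b < s.re) :
    detourIntegral b c R (fun z => Φ z / (s - z)) = 2 * Real.pi * Complex.I * Φ s := by
  have hsb : 0 < (s - b).re := by simpa using hs
  have hline : ∀ t : ℝ, Φ (b + t * Complex.I) / (s - (b + t * Complex.I)) =
      Laplace f (t * Complex.I) / (s - b - t * Complex.I) := fun t => by
    rw [hΦf _ (by simp), add_sub_cancel_left, sub_add_eq_sub_sub]
  have hne : ∀ z ∈ Icc c b ×ℂ Icc (-R) R, s - z ≠ 0 := fun z hz h0 =>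
    (hz.1.2.trans_lt hs).ne (congrArg Complex.re (sub_eq_zero.1 h0)).symm
  rw [detourIntegral_eq_integral_line hcb hR (hΦ.fun_div (by fun_prop) hne)
    (by simpa only [hline] using integrable_laplace_div_sub hf hsb)]
  simp only [hline, integral_laplace_div_sub hf hsb, smul_eq_mul, hΦf s hs.le]
  ring

theorem detourIntegral_div_sub (hf : ∀ x < 0, f x = 0) (hcb : c ≤ b) (hR : 0 < R)
    (hΦ : DifferentiableOn ℂ Φ (rightOfDetour b c R))
    (hΦf : ∀ s : ℂ, b ≤ s.re → Φ s = Laplace f (s - b)) {s : ℂ} (hsc : c < s.re)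
    (hsR : |s.im| < R) :
    detourIntegral b c R (fun z => Φ z / (s - z)) = 2 * Real.pi * Complex.I * Φ s := by
  have hline : IntegrableOn (fun t : ℝ => Φ (b + t * Complex.I)) (Icc (-R) R)ᶜ := by
    have hΦline : ∀ t : ℝ, Φ (b + t * Complex.I) = Laplace f (t * Complex.I) := fun t => by
      rw [hΦf _ (by simp), add_sub_cancel_left]
    simpa only [hΦline] using (integrable_laplace hf).integrableOn
  have hopen := isOpen_halfStrip c R
  have hleft := differentiableOn_detourIntegral_div_sub hcb hR.le
    (hΦ.continuousOn.mono detour_subset_rightOfDetour) hline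
  have hright : DifferentiableOn ℂ (fun s => 2 * Real.pi * Complex.I * Φ s)
      {s : ℂ | c < s.re ∧ |s.im| < R} :=
    (hΦ.mono fun s hs => ⟨hs.1.le, .inl hs.2.le⟩).const_mul _
  have hevent : (fun s => detourIntegral b c R fun z => Φ z / (s - z)) =ᶠ[𝓝 (b + 1 : ℂ)]
      fun s => 2 * Real.pi * Complex.I * Φ s := by
    filter_upwards [(isOpen_lt continuous_const Complex.continuous_re).mem_nhds
      (show b < (b + 1 : ℂ).re by simp)] with s hs
    exact detourIntegral_div_sub_of_lt_re hf hcb hR.le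
      (hΦ.mono reProdIm_subset_rightOfDetour) hΦf hs
  exact (hleft.analyticOnNhd hopen).eqOn_of_preconnected_of_eventuallyEq
    (hright.analyticOnNhd hopen) (isPreconnected_halfStrip c R)
    ⟨by simpa using (by linarith : c < b + 1), by simpa using hR⟩ hevent ⟨hsc, hsR⟩

variable {α r : ℝ} {G : ℂ → (Ici (0 : ℝ) ⊕ Rbar α r) →ᵇ ℂ}

theorem detour_subset_expDomain (hcα : c < α) (hb : b < 0) (hrR : r < R) :
    detour b c R ⊆ expDomain α r := by
  rintro z ⟨⟨-, hzb⟩, hz, -⟩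
  refine mem_expDomain.2 ⟨hzb.trans_lt hb, hz.imp (fun h => h.trans_lt hcα) hrR.trans_le⟩

theorem integrableOn_smul_expKernel (hf : ∀ x < 0, f x = 0) (hb : b < 0) (hcb : c ≤ b)
    (hrR : r < R) (hcont : ContinuousOn (fun z => Φ z • G z) (detour b c R))
    (hG : ∀ z ∈ detour b c R, ⇑(G z) = expKernel α r z)
    (hΦf : ∀ t : ℝ, Φ (b + t * Complex.I) = Laplace f (t * Complex.I)) :
    IntegrableOn (fun t : ℝ => Φ (b + t * Complex.I) • G (b + t * Complex.I)) (Icc (-R) R)ᶜ := by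
  have hmeas := (hcont.comp (g := fun z => Φ z • G z) (by fun_prop) fun _ =>
    line_mem_detour hcb).aestronglyMeasurable (μ := volume) measurableSet_Icc.compl
  refine (((integrable_mul_laplace hf b).norm.add
    ((integrable_laplace hf).norm.const_mul (R - r)⁻¹)).integrableOn).mono' hmeas ?_
  filter_upwards [ae_restrict_mem measurableSet_Icc.compl] with t ht
  have hRt : R < |t| := by rwa [mem_compl_iff, mem_Icc, ← abs_le, not_le] at ht
  have hdist : ∀ s ∈ Rbar α r, R - r ≤ ‖s - (b + t * Complex.I)‖ := fun s hs => by
    have him := Complex.abs_im_le_norm (s - (b + t * Complex.I))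
    simp only [Complex.sub_im, Complex.add_im, Complex.ofReal_im,
      Complex.im_ofReal_mul, Complex.I_im, mul_one, zero_add] at him
    linarith [abs_sub_abs_le_abs_sub t s.im, abs_sub_comm t s.im, hs.2.2]
  have hGle : ‖G (b + t * Complex.I)‖ ≤ ‖(b + t * Complex.I : ℂ)‖ + (R - r)⁻¹ := by
    have hd : 0 < R - r := by linarith
    refine (BoundedContinuousFunction.norm_le (by positivity)).2 fun p => ?_
    rw [hG _ (line_mem_detour hcb ht)]
    exact norm_expKernel_le (by simpa using hb.le) hd hdist p
  calc ‖Φ (b + t * Complex.I) • G (b + t * Complex.I)‖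
      ≤ ‖Laplace f (t * Complex.I)‖ * (‖(b + t * Complex.I : ℂ)‖ + (R - r)⁻¹) := by
        rw [norm_smul, hΦf]
        gcongr
    _ = ‖(b + t * Complex.I) * Laplace f (t * Complex.I)‖ +
          (R - r)⁻¹ * ‖Laplace f (t * Complex.I)‖ := by
        rw [norm_mul]
        ring

theorem exists_mem_topologicalClosure_span_expKernel {D : Set ℂ}
    (hacc : ∃ z ∈ expDomain α r, AccPt z (𝓟 D)) (hf : ∀ x < 0, f x = 0) (hb : b < 0) (hcb : c ≤ b)
    (hcα : c < α) (hR : 0 < R) (hrR : r < R) (hΦ : DifferentiableOn ℂ Φ (rightOfDetour b c R))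
    (hΦf : ∀ s : ℂ, b ≤ s.re → Φ s = Laplace f (s - b))
    (hGd : DifferentiableOn ℂ G (expDomain α r))
    (hG : ∀ ζ ∈ expDomain α r, ⇑(G ζ) = expKernel α r ζ) :
    ∃ V ∈ (Submodule.span ℂ (G '' D)).topologicalClosure,
      (∀ x, V (.inl x) = deriv (fun y : ℝ => Complex.exp (b * y) * f y) x) ∧
      ∀ s, V (.inr s) = Φ s := by
  obtain ⟨z₀, hz₀, hacc⟩ := hacc
  have hsub := detour_subset_expDomain hcα hb hrR
  have hΦline : ∀ t : ℝ, Φ (b + t * Complex.I) = Laplace f (t * Complex.I) := fun t => by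
    rw [hΦf _ (by simp), add_sub_cancel_left]
  have hcont : ContinuousOn (fun z => Φ z • G z) (detour b c R) :=
    (hΦ.continuousOn.mono detour_subset_rightOfDetour).smul (hGd.continuousOn.mono hsub)
  have hline := integrableOn_smul_expKernel hf hb hcb hrR hcont (fun z hz => hG z (hsub hz)) hΦline
  have heval : ∀ p, detourIntegral b c R (fun z => Φ z • G z) p =
      detourIntegral b c R fun z => Φ z * expKernel α r z p := fun p =>
    (map_detourIntegral (evalCLM ℂ p) hcb hR.le hcont hline).trans
      (detourIntegral_congr hcb hR.le fun z hz => by simp [hG z (hsub hz)])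
  have := Submodule.isClosed_topologicalClosure (Submodule.span ℂ (G '' D))
  refine ⟨(2 * Real.pi * Complex.I)⁻¹ • detourIntegral b c R fun z => Φ z • G z,
    Submodule.smul_mem _ _ (detourIntegral_mem _ hcb hR.le hcont hline fun z hz =>
      Submodule.smul_mem _ _ (mem_topologicalClosure_span_image_of_accPt (isOpen_expDomain α r)
        (isPreconnected_expDomain α r) hGd hz₀ hacc (hsub hz))), fun x => ?_, fun s => ?_⟩
  · simp only [coe_smul, smul_eq_mul, heval, expKernel, Sum.elim_inl]
    rw [detourIntegral_mul_mul_exp hf hcb hR.le (hΦ.mono reProdIm_subset_rightOfDetour) hΦline,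
      inv_mul_cancel_left₀ Complex.two_pi_I_ne_zero]
  · simp only [coe_smul, smul_eq_mul, heval, expKernel, Sum.elim_inr, mul_one_div]
    rw [detourIntegral_div_sub hf hcb hR hΦ hΦf (hcα.trans_le s.2.1) (s.2.2.2.trans_lt hrR),
      inv_mul_cancel_left₀ Complex.two_pi_I_ne_zero]

theorem exists_sum_expKernel_near {D : Set ℂ} (hD : D ⊆ expDomain α r)
    (hacc : ∃ z ∈ expDomain α r, AccPt z (𝓟 D)) (hf : ∀ x < 0, f x = 0) (hb : b < 0)
    (hcb : c ≤ b) (hcα : c < α) (hR : 0 < R) (hrR : r < R)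
    (hΦ : DifferentiableOn ℂ Φ (rightOfDetour b c R))
    (hΦf : ∀ s : ℂ, b ≤ s.re → Φ s = Laplace f (s - b)) {ε : ℝ} (hε : 0 < ε) :
    ∃ (n : ℕ) (ζs : Fin n → ℂ) (w : Fin n → ℂ), (∀ j, ζs j ∈ D) ∧ ∃ δ, 0 ≤ δ ∧ δ < ε ∧
      (∀ x : ℝ, 0 ≤ x → ‖deriv (fun y : ℝ => Complex.exp (b * y) * f y) x
        - ∑ j, w j * ζs j * Complex.exp (ζs j * x)‖ ≤ δ) ∧
      ∀ s ∈ Rbar α r, ‖Φ s - ∑ j, w j / (s - ζs j)‖ ≤ δ := by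
  obtain ⟨G, hGd, hG⟩ := exists_differentiableOn_expKernel α r
  obtain ⟨V, hV, hVx, hVs⟩ :=
    exists_mem_topologicalClosure_span_expKernel hacc hf hb hcb hcα hR hrR hΦ hΦf hGd hG
  obtain ⟨n, ζs, w, hζs, hlt⟩ := exists_norm_sub_sum_lt_of_mem_topologicalClosure_span hV hε
  have hcoord := (V - ∑ j, w j • G (ζs j)).norm_coe_le_norm
  simp only [coe_sub, Pi.sub_apply, coe_sum, Finset.sum_apply, coe_smul, smul_eq_mul,
    fun j => hG _ (hD (hζs j))] at hcoord
  refine ⟨n, ζs, w, hζs, _, norm_nonneg _, hlt, fun x hx => ?_, fun s hs => ?_⟩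
  · simpa only [hVx, expKernel, Sum.elim_inl, mul_assoc] using hcoord (.inl ⟨x, hx⟩)
  · simpa only [hVs, expKernel, Sum.elim_inr, mul_one_div] using hcoord (.inr ⟨s, hs⟩)

end Representation

theorem exists_schwartzMap_exp_mul_eq {τ : 𝓢(ℝ, ℂ)} (hτ : ∀ x < 0, τ x = 0) {b h : ℝ}
    (hbh : 0 ≤ b + h) :
    ∃ f : 𝓢(ℝ, ℂ), (∀ x < 0, f x = 0) ∧
      (∀ y : ℝ, Complex.exp (b * y) * f y = Complex.exp (-(h * y)) * τ y) ∧
      ∀ s : ℂ, Laplace f (s - b) = Laplace τ (s + h) := by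
  obtain ⟨f, hfτ⟩ := exists_schwartzMap_exp_smul τ hτ hbh
  have hfexp : ∀ x : ℝ, f x = Complex.exp (-((b + h : ℂ) * x)) * τ x := fun x => by
    rw [hfτ, Complex.real_smul]
    push_cast
    rw [neg_mul]
  refine ⟨f, fun x hx => by rw [hfτ, hτ x hx, smul_zero], fun y => ?_, fun s => ?_⟩
  · rw [hfexp, ← mul_assoc, ← Complex.exp_add]
    ring_nf
  · rw [funext hfexp, laplace_exp_mul]
    ring_nf

theorem mapsTo_add_rightOfDetour {α' b h R : ℝ} (hbh : 0 < b + h) :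
    MapsTo (fun s : ℂ => s + h) (rightOfDetour b (min (α' - h) b) R)
      (Rbar α' R ∪ {s : ℂ | 0 < s.re}) := by
  rintro s ⟨hsc, hs⟩
  simp only [Rbar, mem_union, mem_ofPred_eq, Complex.add_re, Complex.add_im, Complex.ofReal_re,
    Complex.ofReal_im, add_zero]
  rcases le_or_gt (s.re + h) 0 with hsh | hsh
  · refine .inl ⟨?_, by linarith, hs.resolve_right (by linarith)⟩
    rcases min_le_iff.1 hsc with h' | h' <;> linarith
  · exact .inr hsh

theorem approximation_by_exponentials_general {α' α r r' h : ℝ} (hα' : α' < α + h) (hr : 0 ≤ r)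
    (hr' : r < r') (hh : 0 < h) {D : Set ℂ} (hacc : ∃ z ∈ expDomain α r, AccPt z (𝓟 D))
    {τ : 𝓢(ℝ, ℂ)} (hsupp : ∀ x < 0, τ x = 0) {F : ℂ → ℂ}
    (hF : DifferentiableOn ℂ F (Rbar α' r' ∪ {s : ℂ | 0 < s.re}))
    (hFeq : ∀ s : ℂ, 0 < s.re → F s = Laplace τ s) {ε : ℝ} (hε : 0 < ε) :
    ∃ (n : ℕ) (ζs : Fin n → ℂ) (c : Fin n → ℂ), (∀ j, ζs j ∈ D) ∧
      ∃ ε₁ ε₂ : ℝ, 0 ≤ ε₁ ∧ 0 ≤ ε₂ ∧ ε₁ + ε₂ < ε ∧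
        (∀ x : ℝ, 0 ≤ x → ‖deriv (fun y : ℝ => Complex.exp (-(h * y)) * τ y) x
          - ∑ j, c j * ζs j * Complex.exp (ζs j * x)‖ ≤ ε₁) ∧
        ∀ s ∈ Rbar α r, ‖F (s + h) - ∑ j, c j / (s - ζs j)‖ ≤ ε₂ := by
  obtain ⟨b, hhb, hb⟩ : ∃ b, -h < b ∧ b < 0 := exists_between (neg_lt_zero.2 hh)
  have hbh : 0 < b + h := neg_lt_iff_pos_add.1 hhb
  obtain ⟨f, hf, hfτ, hLf⟩ := exists_schwartzMap_exp_mul_eq hsupp hbh.le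
  have hΦ : DifferentiableOn ℂ (fun s => F (s + h)) (rightOfDetour b (min (α' - h) b) r') :=
    hF.comp (by fun_prop) (mapsTo_add_rightOfDetour hbh)
  have hΦf : ∀ s : ℂ, b ≤ s.re → F (s + h) = Laplace f (s - b) := fun s hs =>
    (hFeq _ (by simpa using hbh.trans_le (by gcongr))).trans (hLf s).symm
  have hcα : min (α' - h) b < α := (min_le_left _ _).trans_lt (sub_lt_iff_lt_add.2 hα')
  obtain ⟨z, hz, hzD⟩ := hacc
  obtain ⟨n, ζs, c, hζs, δ, hδ, hδε, hx, hs⟩ := exists_sum_expKernel_near inter_subset_left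
    ⟨z, hz, hzD.nhds_inter ((isOpen_expDomain α r).mem_nhds hz)⟩ hf hb (min_le_right _ _) hcα
    (hr.trans_lt hr') hr' hΦ hΦf (half_pos hε)
  exact ⟨n, ζs, c, fun j => (hζs j).2, δ, δ, hδ, hδ, by linarith,
    by simpa only [hfτ] using hx, hs⟩

/-- Approximation of `τ_h` by finite linear combinations of exponentials
`e_ζ` with `ζ ∈ D`, where `D` is any subset of `{Re ζ < β}` having an
accumulation point in that half-plane: for every `ε > 0` there are
`ζ_1, …, ζ_n ∈ D` and `c_1, …, c_n ∈ ℂ` with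
`‖τ_h − Σ c_j e_{ζ_j}‖_{α,r} < ε`. -/
theorem approximation_by_exponentials
    (β α' α r r' : ℝ) (hβ : β < α') (hα' : α' < α) (hα : α < 0)
    (hr : 0 < r) (hr' : r < r')
    (D : Set ℂ) (hD : D ⊆ {ζ : ℂ | ζ.re < β})
    (hacc : ∃ z : ℂ, z.re < β ∧ AccPt z (Filter.principal D))
    (τ : SchwartzMap ℝ ℂ) (hsupp : ∀ x : ℝ, x < 0 → τ x = 0)
    (U : Set ℂ) (hU : IsOpen U) (hUR : Rbar α' r' ⊆ U)
    (F : ℂ → ℂ)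
    (hFan : DifferentiableOn ℂ F (U ∪ {s : ℂ | 0 < s.re}))
    (hFeq : ∀ s : ℂ, 0 < s.re → F s = Laplace (⇑τ) s)
    (h : ℝ) (hh0 : 0 < h) (hhα' : h < -α')
    (ε : ℝ) (hε : 0 < ε) :
    ∃ (n : ℕ) (ζs : Fin n → ℂ) (c : Fin n → ℂ),
      (∀ j : Fin n, ζs j ∈ D) ∧
      ∃ ε₁ ε₂ : ℝ, 0 ≤ ε₁ ∧ 0 ≤ ε₂ ∧ ε₁ + ε₂ < ε ∧
        (∀ x : ℝ, 0 ≤ x →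
          ‖deriv (fun y : ℝ => Complex.exp (-((h : ℂ) * (y : ℂ))) * τ y) x
            - ∑ j : Fin n, c j * ζs j * Complex.exp (ζs j * (x : ℂ))‖ ≤ ε₁) ∧
        (∀ s ∈ Rbar α r,
          ‖F (s + (h : ℂ)) - ∑ j : Fin n, c j / (s - ζs j)‖ ≤ ε₂) := by
  obtain ⟨z, hzβ, hz⟩ := hacc
  exact approximation_by_exponentials_general (by linarith) hr.le hr' hh0
    ⟨z, mem_expDomain.2 ⟨by linarith, .inl (by linarith)⟩, hz⟩ hsupp
    (hFan.mono (union_subset_union_left _ hUR)) hFeq hε
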